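/- Let G be a finite simple connected graph, m ≥ 2 an integer, and b a branch vertex of G^{1/m}. Let {w1, w2} be an edge of G and let v be the vertex on the thread replacing {w1, w2} at distance x from w1^{1/m}, where 0 ≤ x ≤ m. Then dist_{G^{1/m}}(b, v) mod m ∈ { x mod m, (m − x) mod m }. -/

import Mathlib

open SimpleGraph

/-- The vertex type of the `m`-subdivision of a simple graph `G`:
branch vertices (`Sum.inl`) together with, for each edge (oriented from its
smaller to its larger endpoint) and each `i : Fin (m-1)`, the internal vertex
of the corresponding thread at distance `i+1` from the smaller endpoint. -/
abbrev SubVert (V : Type*) [LinearOrder V] (G : SimpleGraph V) (m : ℕ) : Type _ :=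
  V ⊕ ({e : V × V // G.Adj e.1 e.2 ∧ e.1 < e.2} × Fin (m - 1))

/-- Basic adjacency generating relation for the `m`-subdivision. -/
def subPre {V : Type*} [LinearOrder V] (G : SimpleGraph V) (m : ℕ) :
    SubVert V G m → SubVert V G m → Prop
  | Sum.inl u, Sum.inl v => m = 1 ∧ G.Adj u v
  | Sum.inl u, Sum.inr ei => (u = ei.1.1.1 ∧ (ei.2 : ℕ) = 0) ∨ (u = ei.1.1.2 ∧ (ei.2 : ℕ) + 2 = m)
  | Sum.inr ei, Sum.inr ej => ei.1 = ej.1 ∧ (ei.2 : ℕ) + 1 = (ej.2 : ℕ)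
  | Sum.inr _, Sum.inl _ => False

/-- The `m`-subdivision `G^{1/m}` of `G`: every edge of `G` is replaced by a
path (thread) of length `m`. -/
def Subdiv {V : Type*} [LinearOrder V] (G : SimpleGraph V) (m : ℕ) :
    SimpleGraph (SubVert V G m) :=
  SimpleGraph.fromRel (subPre G m)

/-- The vertex of `G^{1/m}` lying on the thread replacing the edge `{w₁, w₂}`
at distance `x` along the thread from `w₁` (for `0 ≤ x ≤ m`). -/
def threadVert {V : Type*} [LinearOrder V] (G : SimpleGraph V) (m : ℕ) (w₁ w₂ : V)
    (h : G.Adj w₁ w₂) (x : ℕ) : SubVert V G m :=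
  if hx0 : x = 0 then Sum.inl w₁
  else if hxm : m ≤ x then Sum.inl w₂
  else if hlt : w₁ < w₂ then
    Sum.inr (⟨(w₁, w₂), h, hlt⟩, ⟨x - 1, by omega⟩)
  else
    Sum.inr (⟨(w₂, w₁), h.symm, lt_of_le_of_ne (not_lt.mp hlt) h.ne'⟩, ⟨m - x - 1, by omega⟩)

/-- A vertex of `G^{1/m}` lies on the thread replacing the edge `{w₁, w₂}`. -/
def OnThread {V : Type*} [LinearOrder V] (G : SimpleGraph V) (m : ℕ) (w₁ w₂ : V)
    (h : G.Adj w₁ w₂) (v : SubVert V G m) : Prop :=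
  ∃ x ≤ m, v = threadVert G m w₁ w₂ h x

/-!
The values of `m * dist(b, ·)` at the two ends of an edge of `G` differ by at most `m`, the length
of a thread. So the function which is `m * dist(b, w)` at a branch vertex `w`, extended to a thread
by taking the cheaper of its two ends, changes by at most `1` along each edge of `G^{1/m}`. It is
therefore a lower bound for the distance from `b`, and lifting shortest walks of `G` shows that it
is attained: `dist(b, v) = min (m * dist(b, w₁) + x) (m * dist(b, w₂) + (m - x))`.
-/

section Walk

variable {W : Type*} {H : SimpleGraph W} {s t : W}

theorem le_add_length_of_forall_adj {f : W → ℕ} (hf : ∀ ⦃s t⦄, H.Adj s t → f t ≤ f s + 1)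
    (p : H.Walk s t) : f t ≤ f s + p.length := by
  induction p with
  | nil => exact le_rfl
  | cons h p ih =>
    have hstep := hf h
    rw [Walk.length_cons]
    omega

theorem le_add_dist_of_forall_adj {f : W → ℕ} (hf : ∀ ⦃s t⦄, H.Adj s t → f t ≤ f s + 1)
    (h : H.Reachable s t) : f t ≤ f s + H.dist s t := by
  obtain ⟨p, hp⟩ := h.exists_walk_length_eq_dist
  exact hp ▸ le_add_length_of_forall_adj hf p

theorem dist_le_dist_add_one_of_adj (h : H.Adj s t) (b : W) : H.dist b t ≤ H.dist b s + 1 :=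
  (h.reachable.dist_triangle_right b).trans_eq (by rw [dist_eq_one_iff_adj.mpr h])

end Walk

section Thread

variable {V : Type*} [LinearOrder V] {G : SimpleGraph V} {m x : ℕ} {w₁ w₂ : V}

theorem threadVert_zero (hw : G.Adj w₁ w₂) : threadVert G m w₁ w₂ hw 0 = Sum.inl w₁ := by
  simp [threadVert]

theorem threadVert_self (hm : m ≠ 0) (hw : G.Adj w₁ w₂) :
    threadVert G m w₁ w₂ hw m = Sum.inl w₂ := by
  simp [threadVert, hm]

theorem threadVert_fin_succ (e : {e : V × V // G.Adj e.1 e.2 ∧ e.1 < e.2}) (i : Fin (m - 1)) :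
    threadVert G m e.1.1 e.1.2 e.2.1 (i + 1) = Sum.inr (e, i) := by
  have hi : ¬m ≤ i + 1 := by omega
  simp [threadVert, hi, e.2.2]

theorem threadVert_symm (hm : m ≠ 0) (hw : G.Adj w₁ w₂) (hx : x ≤ m) :
    threadVert G m w₂ w₁ hw.symm (m - x) = threadVert G m w₁ w₂ hw x := by
  rcases hx.eq_or_lt with rfl | hxm
  · rw [Nat.sub_self, threadVert_zero, threadVert_self hm]
  rcases x.eq_zero_or_pos with rfl | hx₀
  · rw [Nat.sub_zero, threadVert_self hm, threadVert_zero]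
  have hx₀' : m - x ≠ 0 := by omega
  have hxm' : ¬m ≤ m - x := by omega
  rcases hw.ne.lt_or_gt with hlt | hgt
  · simp [threadVert, hx₀.ne', hxm.not_ge, hx₀', hxm', hlt, hlt.not_gt, Nat.sub_sub_self hx]
  · simp [threadVert, hx₀.ne', hxm.not_ge, hx₀', hxm', hgt, hgt.not_gt]

theorem subdiv_adj_threadVert_succ (hw : G.Adj w₁ w₂) (hx : x < m) :
    (Subdiv G m).Adj (threadVert G m w₁ w₂ hw x) (threadVert G m w₁ w₂ hw (x + 1)) := by
  simp only [Subdiv, fromRel_adj, threadVert]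
  split_ifs <;> grind [subPre, hw.ne]

theorem exists_threadVert_of_subPre {s t : SubVert V G m} (h : subPre G m s t) :
    ∃ (w₁ w₂ : V) (hw : G.Adj w₁ w₂), ∃ x < m,
      s = threadVert G m w₁ w₂ hw x ∧ t = threadVert G m w₁ w₂ hw (x + 1) := by
  rcases s with u | ⟨e, i⟩ <;> rcases t with v | ⟨e', j⟩
  · obtain ⟨rfl, huv⟩ := h
    exact ⟨u, v, huv, 0, one_pos, (threadVert_zero huv).symm,
      (threadVert_self one_ne_zero huv).symm⟩
  · have hm : m ≠ 0 := Nat.ne_zero_of_lt (Nat.lt_of_lt_pred j.isLt)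
    rcases h with ⟨rfl, hj : (j : ℕ) = 0⟩ | ⟨rfl, hj : (j : ℕ) + 2 = m⟩
    · refine ⟨_, _, e'.2.1, 0, by omega, (threadVert_zero _).symm, ?_⟩
      rw [← threadVert_fin_succ, hj]
    · refine ⟨_, _, e'.2.1.symm, 0, by omega, (threadVert_zero _).symm, ?_⟩
      rw [← threadVert_fin_succ, ← threadVert_symm hm _ (by omega)]
      congr 1
      omega
  · exact h.elim
  · obtain ⟨rfl : e = e', hij : (i : ℕ) + 1 = j⟩ := h
    refine ⟨_, _, e.2.1, i + 1, by omega, (threadVert_fin_succ e i).symm, ?_⟩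
    rw [hij, threadVert_fin_succ]

theorem exists_threadVert_of_subdiv_adj {s t : SubVert V G m} (h : (Subdiv G m).Adj s t) :
    ∃ (w₁ w₂ : V) (hw : G.Adj w₁ w₂), ∃ x < m,
      s = threadVert G m w₁ w₂ hw x ∧ t = threadVert G m w₁ w₂ hw (x + 1) := by
  rcases ((fromRel_adj _ _ _).mp h).2 with hst | hts
  · exact exists_threadVert_of_subPre hst
  · obtain ⟨w₁, w₂, hw, x, hx, rfl, rfl⟩ := exists_threadVert_of_subPre hts
    have hm : m ≠ 0 := by omega
    refine ⟨w₂, w₁, hw.symm, m - (x + 1), by omega, (threadVert_symm hm hw hx).symm, ?_⟩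
    rw [← threadVert_symm hm hw hx.le]
    congr 1
    omega

end Thread

section LowerBound

variable {V : Type*} [LinearOrder V] {G : SimpleGraph V} {m x : ℕ} {w₁ w₂ : V} {f : V → ℕ}

/-- The extension of a function `f` on the vertices of `G` to the vertices of `G^{1/m}`: it is
`m * f` on branch vertices, and an internal vertex takes the smaller of the values obtained by
walking in from the two ends of its thread. With `f = dist(b, ·)` it computes distances from `b`. -/
def subdivExtend (m : ℕ) (f : V → ℕ) : SubVert V G m → ℕ
  | Sum.inl u => m * f u
  | Sum.inr (e, i) => min (m * f e.1.1 + (i + 1)) (m * f e.1.2 + (m - (i + 1)))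

theorem subdivExtend_threadVert (hf : ∀ ⦃u v⦄, G.Adj u v → f v ≤ f u + 1) (hw : G.Adj w₁ w₂)
    (hx : x ≤ m) :
    subdivExtend m f (threadVert G m w₁ w₂ hw x) =
      min (m * f w₁ + x) (m * f w₂ + (m - x)) := by
  have h₁₂ : m * f w₂ ≤ m * f w₁ + m := Nat.mul_le_mul_left m (hf hw)
  have h₂₁ : m * f w₁ ≤ m * f w₂ + m := Nat.mul_le_mul_left m (hf hw.symm)
  unfold threadVert
  split_ifs <;> simp only [subdivExtend] <;> omega

theorem subdivExtend_le_add_one_of_adj (hf : ∀ ⦃u v⦄, G.Adj u v → f v ≤ f u + 1)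
    ⦃s t : SubVert V G m⦄ (h : (Subdiv G m).Adj s t) :
    subdivExtend m f t ≤ subdivExtend m f s + 1 := by
  obtain ⟨w₁, w₂, hw, x, hx, rfl, rfl⟩ := exists_threadVert_of_subdiv_adj h
  rw [subdivExtend_threadVert hf hw hx, subdivExtend_threadVert hf hw hx.le]
  omega

end LowerBound

section UpperBound

variable {V : Type*} [LinearOrder V] {G : SimpleGraph V} {m x : ℕ} {b u v w₁ w₂ : V}

theorem exists_walk_threadVert_length_eq (hw : G.Adj w₁ w₂) (hx : x ≤ m) :
    ∃ p : (Subdiv G m).Walk (Sum.inl w₁) (threadVert G m w₁ w₂ hw x), p.length = x := by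
  induction x with
  | zero => exact ⟨Walk.nil.copy rfl (threadVert_zero hw).symm, by simp⟩
  | succ x ih =>
    obtain ⟨p, hp⟩ := ih (by omega)
    exact ⟨p.concat (subdiv_adj_threadVert_succ hw hx), by simp [hp]⟩

theorem exists_subdiv_walk_length_eq_mul (hm : m ≠ 0) (p : G.Walk u v) :
    ∃ q : (Subdiv G m).Walk (Sum.inl u) (Sum.inl v), q.length = m * p.length := by
  induction p with
  | nil => exact ⟨Walk.nil, rfl⟩
  | cons h p ih =>
    obtain ⟨q, hq⟩ := ih
    obtain ⟨r, hr⟩ := exists_walk_threadVert_length_eq h le_rfl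
    refine ⟨(r.copy rfl (threadVert_self hm h)).append q, ?_⟩
    rw [Walk.length_append, Walk.length_copy, hr, hq, Walk.length_cons]
    ring

theorem exists_subdiv_walk_length_eq_mul_dist_add (hm : m ≠ 0) (hb : G.Reachable b w₁)
    (hw : G.Adj w₁ w₂) (hx : x ≤ m) :
    ∃ p : (Subdiv G m).Walk (Sum.inl b) (threadVert G m w₁ w₂ hw x),
      p.length = m * G.dist b w₁ + x := by
  obtain ⟨p, hp⟩ := hb.exists_walk_length_eq_dist
  obtain ⟨q, hq⟩ := exists_subdiv_walk_length_eq_mul hm p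
  obtain ⟨r, hr⟩ := exists_walk_threadVert_length_eq hw hx
  exact ⟨q.append r, by rw [Walk.length_append, hq, hr, hp]⟩

theorem subdiv_dist_threadVert_le (hm : m ≠ 0) (hb : G.Reachable b w₁) (hw : G.Adj w₁ w₂)
    (hx : x ≤ m) :
    (Subdiv G m).dist (Sum.inl b) (threadVert G m w₁ w₂ hw x) ≤ m * G.dist b w₁ + x := by
  obtain ⟨p, hp⟩ := exists_subdiv_walk_length_eq_mul_dist_add hm hb hw hx
  exact hp ▸ dist_le p

theorem subdiv_reachable_threadVert (hm : m ≠ 0) (hb : G.Reachable b w₁) (hw : G.Adj w₁ w₂)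
    (hx : x ≤ m) : (Subdiv G m).Reachable (Sum.inl b) (threadVert G m w₁ w₂ hw x) :=
  (exists_subdiv_walk_length_eq_mul_dist_add hm hb hw hx).nonempty

end UpperBound

theorem subdiv_dist_threadVert {V : Type*} [LinearOrder V] {G : SimpleGraph V} {m x : ℕ}
    {b w₁ w₂ : V} (hm : m ≠ 0) (hb : G.Reachable b w₁) (hw : G.Adj w₁ w₂) (hx : x ≤ m) :
    (Subdiv G m).dist (Sum.inl b) (threadVert G m w₁ w₂ hw x) =
      min (m * G.dist b w₁ + x) (m * G.dist b w₂ + (m - x)) := by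
  apply le_antisymm
  · refine le_min (subdiv_dist_threadVert_le hm hb hw hx) ?_
    rw [← threadVert_symm hm hw hx]
    exact subdiv_dist_threadVert_le hm (hb.trans hw.reachable) hw.symm (Nat.sub_le m x)
  · have hdist : ∀ ⦃u v⦄, G.Adj u v → G.dist b v ≤ G.dist b u + 1 :=
      fun _ _ h ↦ dist_le_dist_add_one_of_adj h b
    have hle := le_add_dist_of_forall_adj (subdivExtend_le_add_one_of_adj hdist)
      (subdiv_reachable_threadVert hm hb hw hx)
    have hzero : subdivExtend m (G.dist b) (Sum.inl b : SubVert V G m) = 0 := by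
      simp [subdivExtend]
    rwa [subdivExtend_threadVert hdist hw hx, hzero, zero_add] at hle

theorem subdiv_dist_mod_mem_general {V : Type*} [LinearOrder V] {m : ℕ} (G : SimpleGraph V)
    (hm : m ≠ 0) (b w₁ w₂ : V) (hb : G.Reachable b w₁) (hw : G.Adj w₁ w₂) (x : ℕ) (hx : x ≤ m) :
    (Subdiv G m).dist (Sum.inl b) (threadVert G m w₁ w₂ hw x) % m = x % m ∨
    (Subdiv G m).dist (Sum.inl b) (threadVert G m w₁ w₂ hw x) % m = (m - x) % m := by
  rw [subdiv_dist_threadVert hm hb hw hx]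
  rcases min_choice (m * G.dist b w₁ + x) (m * G.dist b w₂ + (m - x)) with h | h
  · exact .inl (by rw [h, Nat.mul_add_mod])
  · exact .inr (by rw [h, Nat.mul_add_mod])

/-- For a branch vertex `b` and the vertex `v` at distance `x` (`0 ≤ x ≤ m`)
from `w₁` along the thread of the edge `{w₁, w₂}`,
`dist(b, v) mod m ∈ { x mod m, (m − x) mod m }`. -/
theorem subdiv_dist_mod_mem {n m : ℕ} (G : SimpleGraph (Fin n))
    (hG : G.Connected) (hm : 2 ≤ m) (b w₁ w₂ : Fin n) (hw : G.Adj w₁ w₂)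
    (x : ℕ) (hx : x ≤ m) :
    (Subdiv G m).dist (Sum.inl b) (threadVert G m w₁ w₂ hw x) % m = x % m ∨
    (Subdiv G m).dist (Sum.inl b) (threadVert G m w₁ w₂ hw x) % m = (m - x) % m :=
  subdiv_dist_mod_mem_general G (by omega) b w₁ w₂ (hG b w₁) hw x hx
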